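/- Let n ≥ 3, let 0 < φ ≤ π/2 and φ < θ ≤ 2φ. Then A(n,θ,φ) ≤ k(n−1), where k(n−1) := A(n−1,π/3) is the kissing number of S^{n−2} ⊂ ℝ^{n−1}. Moreover, if K ≥ 2 is such that every K-point subset of the unit sphere S^{n−2} ⊂ ℝ^{n−1} contains two distinct points at angular distance at most π/3, then A(n,θ,φ) < K. -/

import Mathlib

noncomputable section

/-- The "North pole" `(0, …, 0, 1)` of the unit sphere in `ℝ^n`. -/
def north (n : ℕ) : EuclideanSpace ℝ (Fin n) :=
  if h : 0 < n then EuclideanSpace.single ⟨n - 1, Nat.sub_lt h Nat.one_pos⟩ 1 else 0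

/-- Angular distance between two points: `arccos ⟨x, y⟩`. -/
def aDist {n : ℕ} (x y : EuclideanSpace ℝ (Fin n)) : ℝ := Real.arccos (inner ℝ x y : ℝ)

/-- A finite set of unit vectors with pairwise angular distance at least `θ`. -/
def IsCode {n : ℕ} (θ : ℝ) (C : Finset (EuclideanSpace ℝ (Fin n))) : Prop :=
  (∀ x ∈ C, ‖x‖ = 1) ∧ ∀ x ∈ C, ∀ y ∈ C, x ≠ y → θ ≤ aDist x y

/-- `A(n, θ)`: maximal size of a `θ`-code on the unit sphere `S^{n-1} ⊂ ℝ^n`. -/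
def sphereMax (n : ℕ) (θ : ℝ) : ℕ :=
  sSup {M | ∃ C : Finset (EuclideanSpace ℝ (Fin n)), IsCode θ C ∧ C.card = M}

/-- `A(n, θ, φ)`: maximal size of a `θ`-code in the cap of angular radius `φ` about the
North pole. -/
def capMax (n : ℕ) (θ φ : ℝ) : ℕ :=
  sSup {M | ∃ C : Finset (EuclideanSpace ℝ (Fin n)), IsCode θ C ∧
    (∀ x ∈ C, aDist x (north n) ≤ φ) ∧ C.card = M}

/-- `A(n, θ, [ψ, φ])`: maximal size of a `θ`-code in the strip `Z(n, [ψ, φ])`. -/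
def stripMax (n : ℕ) (θ ψ φ : ℝ) : ℕ :=
  sSup {M | ∃ C : Finset (EuclideanSpace ℝ (Fin n)), IsCode θ C ∧
    (∀ x ∈ C, ψ ≤ aDist x (north n) ∧ aDist x (north n) ≤ φ) ∧ C.card = M}

/-- `m(n, d)`: maximal number of points in the closed unit ball of `ℝ^n` with pairwise
Euclidean distances at least `d`. -/
def ballMax (n : ℕ) (d : ℝ) : ℕ :=
  sSup {M | ∃ C : Finset (EuclideanSpace ℝ (Fin n)), (∀ x ∈ C, ‖x‖ ≤ 1) ∧
    (∀ x ∈ C, ∀ y ∈ C, x ≠ y → d ≤ dist x y) ∧ C.card = M}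

/-- `ω(θ, α, β) = arccos((cos θ - cos α cos β) / (sin α sin β))`. -/
def omega2 (θ α β : ℝ) : ℝ :=
  Real.arccos ((Real.cos θ - Real.cos α * Real.cos β) / (Real.sin α * Real.sin β))

/-- `ω(θ, α) := ω(θ, α, α)`. -/
def omega1 (θ α : ℝ) : ℝ := omega2 θ α α

end

/-! The azimuths, seen from the pole, of the points of a cap code form a code of the same size on
the equatorial sphere. By the spherical law of cosines the azimuths of points at colatitudes `α`
and `β` and angular distance `ω` make the angle `omega2 ω α β`. If `0 < β ≤ α ≤ π / 2` and `α < ω`,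
the numerator in `omega2 ω α β` is less than
`cos α * (1 - cos β) ≤ cos β * (1 - cos β) ≤ sin β ^ 2 / 2 ≤ sin α * sin β / 2`,
so that angle exceeds `π / 3`. -/

open InnerProductGeometry Module NormedSpace Real Submodule
open scoped RealInnerProductSpace

section Omega

theorem pi_div_three_lt_arccos_iff {z : ℝ} : π / 3 < arccos z ↔ z < 1 / 2 := by
  have h : arcsin z < π / 6 ↔ z < sin (π / 6) :=
    arcsin_lt_iff_lt_sin' ⟨by linarith [pi_pos], by linarith [pi_pos]⟩
  rw [← sin_pi_div_six, ← h, arccos]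
  constructor <;> intro <;> linarith

theorem cos_mul_one_sub_cos_le {α β : ℝ} (hβ : 0 ≤ β) (hβα : β ≤ α) (hα : α ≤ π / 2) :
    cos α * (1 - cos β) ≤ sin α * sin β / 2 := by
  have hcos : cos α ≤ cos β := cos_le_cos_of_nonneg_of_le_pi hβ (by linarith [pi_pos]) hβα
  have hsin : sin β ≤ sin α := sin_le_sin_of_le_of_le_pi_div_two (by linarith [pi_pos]) hα hβα
  have hsin_nonneg : 0 ≤ sin β := sin_nonneg_of_nonneg_of_le_pi hβ (by linarith [pi_pos])
  calc cos α * (1 - cos β)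
      ≤ cos β * (1 - cos β) := by gcongr; linarith [cos_le_one β]
    _ ≤ sin β * sin β / 2 := by nlinarith [sin_sq_add_cos_sq β, sq_nonneg (1 - cos β)]
    _ ≤ sin α * sin β / 2 := by gcongr

theorem omega2_comm (ω α β : ℝ) : omega2 ω α β = omega2 ω β α := by
  simp only [omega2, mul_comm]

theorem pi_div_three_lt_omega2 {ω α β : ℝ} (hα : 0 < α) (hα' : α ≤ π / 2) (hβ : 0 < β)
    (hβ' : β ≤ π / 2) (hαω : α < ω) (hβω : β < ω) (hω : ω ≤ π) : π / 3 < omega2 ω α β := by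
  wlog hβα : β ≤ α generalizing α β
  · rw [omega2_comm]
    exact this hβ hβ' hα hα' hβω hαω (le_of_not_ge hβα)
  have hsinα : 0 < sin α := sin_pos_of_pos_of_lt_pi hα (by linarith)
  have hsinβ : 0 < sin β := sin_pos_of_pos_of_lt_pi hβ (by linarith)
  have hcos : cos ω < cos α := cos_lt_cos_of_nonneg_of_le_pi hα.le hω hαω
  rw [omega2, pi_div_three_lt_arccos_iff, div_lt_iff₀ (mul_pos hsinα hsinβ)]
  linarith [cos_mul_one_sub_cos_le hβ.le hβα hα']

end Omega

section Azimuth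

variable {E : Type*} [NormedAddCommGroup E] [InnerProductSpace ℝ E]

/-- The azimuth of `x` seen from the pole `e`: the direction of the orthogonal projection of `x`
to the equatorial hyperplane `eᗮ`. It is `0` when `x` is a multiple of `e`. -/
noncomputable def azimuth (e x : E) : (ℝ ∙ e)ᗮ :=
  normalize ((ℝ ∙ e)ᗮ.orthogonalProjectionOnto x)

theorem inner_orthogonalProjectionOnto_span_singleton_orthogonal (e x y : E) :
    ⟪(ℝ ∙ e)ᗮ.orthogonalProjectionOnto x, (ℝ ∙ e)ᗮ.orthogonalProjectionOnto y⟫ =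
      ‖x‖ * ‖y‖ * (cos (angle x y) - cos (angle x e) * cos (angle y e)) := by
  have hproj : (((ℝ ∙ e)ᗮ.orthogonalProjectionOnto y : (ℝ ∙ e)ᗮ) : E) =
      y - (⟪y, e⟫ / ‖e‖ ^ 2) • e := by
    simp [real_inner_comm e y, starProjection_orthogonal, starProjection_singleton]
  rw [inner_orthogonalProjectionOnto_eq_of_mem_right, hproj, inner_sub_right, inner_smul_right,
    ← cos_angle_mul_norm_mul_norm x y, ← cos_angle_mul_norm_mul_norm x e,
    ← cos_angle_mul_norm_mul_norm y e]
  rcases eq_or_ne e 0 with rfl | he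
  · simp [mul_comm]
  · field_simp

theorem norm_orthogonalProjectionOnto_span_singleton_orthogonal (e x : E) :
    ‖(ℝ ∙ e)ᗮ.orthogonalProjectionOnto x‖ = ‖x‖ * sin (angle x e) := by
  have hself : cos (angle x x) * (‖x‖ * ‖x‖) = ‖x‖ * ‖x‖ := by
    rw [cos_angle_mul_norm_mul_norm, real_inner_self_eq_norm_mul_norm]
  rw [← sq_eq_sq₀ (norm_nonneg _) (mul_nonneg (norm_nonneg _) (sin_angle_nonneg _ _)),
    ← real_inner_self_eq_norm_sq, inner_orthogonalProjectionOnto_span_singleton_orthogonal,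
    mul_pow, sin_sq]
  linear_combination hself

theorem norm_azimuth {e x : E} (hx : x ≠ 0) (hpos : 0 < angle x e) (hlt : angle x e < π) :
    ‖azimuth e x‖ = 1 := by
  rw [azimuth, norm_normalize_eq_one_iff, ← norm_ne_zero_iff,
    norm_orthogonalProjectionOnto_span_singleton_orthogonal]
  exact (mul_pos (norm_pos_iff.2 hx) (sin_pos_of_pos_of_lt_pi hpos hlt)).ne'

theorem angle_azimuth {x y : E} (hx : x ≠ 0) (hy : y ≠ 0) (e : E) :
    angle (azimuth e x) (azimuth e y) = omega2 (angle x y) (angle x e) (angle y e) := by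
  rw [azimuth, azimuth, angle_normalize_left, angle_normalize_right, angle,
    inner_orthogonalProjectionOnto_span_singleton_orthogonal,
    norm_orthogonalProjectionOnto_span_singleton_orthogonal,
    norm_orthogonalProjectionOnto_span_singleton_orthogonal, omega2, mul_mul_mul_comm,
    mul_div_mul_left _ _ (mul_ne_zero (norm_ne_zero_iff.2 hx) (norm_ne_zero_iff.2 hy))]

theorem angle_pos_of_angle_lt_angle {e x y : E} (h : angle y e < angle x y) : 0 < angle x e := by
  linarith [angle_le_angle_add_angle x e y, angle_comm e y]

theorem pi_div_three_lt_angle_azimuth {e x y : E} {φ : ℝ} (hφ : φ ≤ π / 2) (hx : x ≠ 0)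
    (hy : y ≠ 0) (hxe : angle x e ≤ φ) (hye : angle y e ≤ φ) (hxy : φ < angle x y) :
    π / 3 < angle (azimuth e x) (azimuth e y) := by
  have hyx : φ < angle y x := angle_comm x y ▸ hxy
  rw [angle_azimuth hx hy]
  exact pi_div_three_lt_omega2 (angle_pos_of_angle_lt_angle (hye.trans_lt hxy)) (hxe.trans hφ)
    (angle_pos_of_angle_lt_angle (hxe.trans_lt hyx)) (hye.trans hφ) (hxe.trans_lt hxy)
    (hye.trans_lt hxy) (angle_le_pi x y)

theorem exists_finset_orthogonal_pairwise_pi_div_three_lt_angle {e : E} {φ : ℝ} (hφ : φ ≤ π / 2)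
    {C : Finset E} (hC : (C : Set E).Nontrivial) (hne : ∀ x ∈ C, x ≠ 0)
    (hcap : ∀ x ∈ C, angle x e ≤ φ) (hsep : (C : Set E).Pairwise fun x y ↦ φ < angle x y) :
    ∃ D : Finset (ℝ ∙ e)ᗮ, (∀ x ∈ D, ‖x‖ = 1) ∧
      ((D : Set (ℝ ∙ e)ᗮ).Pairwise fun x y ↦ π / 3 < angle x y) ∧ D.card = C.card := by
  classical
  have hunit : ∀ x ∈ C, ‖azimuth e x‖ = 1 := by
    intro x hx
    obtain ⟨y, hy, hyx⟩ := hC.exists_ne x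
    exact norm_azimuth (hne x hx)
      (angle_pos_of_angle_lt_angle ((hcap y hy).trans_lt (hsep hx hy hyx.symm)))
      (by linarith [hcap x hx, pi_pos])
  have hangle : ∀ x ∈ C, ∀ y ∈ C, x ≠ y → π / 3 < angle (azimuth e x) (azimuth e y) :=
    fun x hx y hy hxy ↦ pi_div_three_lt_angle_azimuth hφ (hne x hx) (hne y hy) (hcap x hx)
      (hcap y hy) (hsep hx hy hxy)
  have hinj : Set.InjOn (azimuth e) C := by
    intro x hx y hy hxy
    by_contra hxy'
    have hazimuth : azimuth e y ≠ 0 := norm_ne_zero_iff.1 (by simp [hunit y hy])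
    have hlt := hangle x hx y hy hxy'
    rw [hxy, angle_self hazimuth] at hlt
    linarith [pi_pos]
  refine ⟨C.image (azimuth e), Finset.forall_mem_image.2 hunit, ?_,
    Finset.card_image_of_injOn hinj⟩
  rw [Finset.coe_image, hinj.pairwise_image]
  exact fun x hx y hy hxy ↦ hangle x hx y hy hxy

end Azimuth

section Codes

variable {n : ℕ} {θ φ : ℝ}

theorem aDist_eq_angle {x y : EuclideanSpace ℝ (Fin n)} (hx : ‖x‖ = 1) (hy : ‖y‖ = 1) :
    aDist x y = angle x y := by
  simp [aDist, angle, hx, hy]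

theorem norm_north (n : ℕ) [NeZero n] : ‖north n‖ = 1 := by
  simp [north, Nat.pos_of_neZero n]

theorem IsCode.card_le {C : Finset (EuclideanSpace ℝ (Fin n))} (hC : IsCode θ C)
    (hθ : π / 3 ≤ θ) : C.card ≤ 5 ^ n := by
  have hsep : ∀ x ∈ C, ∀ y ∈ C, x ≠ y → 1 ≤ ‖x - y‖ := by
    intro x hx y hy hxy
    have hinner : ⟪x, y⟫ ≤ 1 / 2 := by
      rw [inner_eq_cos_angle_of_norm_eq_one (hC.1 x hx) (hC.1 y hy), ← cos_pi_div_three,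
        ← aDist_eq_angle (hC.1 x hx) (hC.1 y hy)]
      exact cos_le_cos_of_nonneg_of_le_pi (by positivity) (arccos_le_pi _)
        (hθ.trans (hC.2 x hx y hy hxy))
    have hsq := norm_sub_sq_real x y
    rw [hC.1 x hx, hC.1 y hy] at hsq
    exact (one_le_sq_iff₀ (norm_nonneg _)).1 (by linarith)
  simpa using Besicovitch.card_le_of_separated C (fun x hx ↦ by simp [hC.1 x hx]) hsep

theorem IsCode.card_le_sphereMax {C : Finset (EuclideanSpace ℝ (Fin n))} (hC : IsCode θ C)
    (hθ : π / 3 ≤ θ) : C.card ≤ sphereMax n θ :=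
  le_csSup ⟨5 ^ n, by rintro _ ⟨D, hD, rfl⟩; exact hD.card_le hθ⟩ ⟨C, hC, rfl⟩

theorem capMax_le {N : ℕ} (h : ∀ C : Finset (EuclideanSpace ℝ (Fin n)), IsCode θ C →
    (∀ x ∈ C, aDist x (north n) ≤ φ) → C.card ≤ N) : capMax n θ φ ≤ N :=
  csSup_le' (by rintro _ ⟨C, hC, hcap, rfl⟩; exact h C hC hcap)

theorem capMax_lt {N : ℕ} (h : ∀ C : Finset (EuclideanSpace ℝ (Fin n)), IsCode θ C →
    (∀ x ∈ C, aDist x (north n) ≤ φ) → C.card < N) : capMax n θ φ < N := by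
  have hN : 0 < N := h ∅ (by simp [IsCode]) (by simp)
  exact (capMax_le fun C hC hcap ↦ Nat.le_sub_one_of_lt (h C hC hcap)).trans_lt
    (Nat.sub_one_lt hN.ne')

theorem exists_finset_norm_eq_one_card_eq {E : Type*} [NormedAddCommGroup E] [NormedSpace ℝ E]
    [Nontrivial E] {k : ℕ} (hk : k ≤ 1) : ∃ D : Finset E, (∀ x ∈ D, ‖x‖ = 1) ∧ D.card = k := by
  obtain ⟨u, hu⟩ := exists_norm_eq E zero_le_one
  obtain ⟨D, hD, hcard⟩ := Finset.exists_subset_card_eq (s := {u}) hk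
  exact ⟨D, fun x hx ↦ Finset.mem_singleton.1 (hD hx) ▸ hu, hcard⟩

theorem IsCode.exists_finset_orthogonal_north {C : Finset (EuclideanSpace ℝ (Fin (n + 1)))}
    (hC : IsCode θ C) (hcard : 1 < C.card) (hφ : φ ≤ π / 2) (hφθ : φ < θ)
    (hcap : ∀ x ∈ C, aDist x (north (n + 1)) ≤ φ) :
    ∃ D : Finset (ℝ ∙ north (n + 1))ᗮ, (∀ x ∈ D, ‖x‖ = 1) ∧
      ((D : Set (ℝ ∙ north (n + 1))ᗮ).Pairwise fun x y ↦ π / 3 < angle x y) ∧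
      D.card = C.card := by
  refine exists_finset_orthogonal_pairwise_pi_div_three_lt_angle hφ
    (Finset.one_lt_card_iff_nontrivial.1 hcard) ?_ ?_ ?_
  · intro x hx
    exact norm_ne_zero_iff.1 (by simp [hC.1 x hx])
  · intro x hx
    rw [← aDist_eq_angle (hC.1 x hx) (norm_north _)]
    exact hcap x hx
  · intro x hx y hy hxy
    rw [← aDist_eq_angle (hC.1 x hx) (hC.1 y hy)]
    exact hφθ.trans_le (hC.2 x hx y hy hxy)

theorem IsCode.exists_finset_pi_div_three_lt_aDist [NeZero n]
    {C : Finset (EuclideanSpace ℝ (Fin (n + 1)))} (hC : IsCode θ C) (hφ : φ ≤ π / 2) (hφθ : φ < θ)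
    (hcap : ∀ x ∈ C, aDist x (north (n + 1)) ≤ φ) :
    ∃ D : Finset (EuclideanSpace ℝ (Fin n)), (∀ x ∈ D, ‖x‖ = 1) ∧
      (∀ x ∈ D, ∀ y ∈ D, x ≠ y → π / 3 < aDist x y) ∧ D.card = C.card := by
  rcases le_or_gt C.card 1 with hcard | hcard
  · obtain ⟨D, hD, hDC⟩ :=
      exists_finset_norm_eq_one_card_eq (E := EuclideanSpace ℝ (Fin n)) hcard
    have hsub := Finset.card_le_one.1 (hDC.trans_le hcard)
    exact ⟨D, hD, fun x hx y hy hxy ↦ absurd (hsub x hx y hy) hxy, hDC⟩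
  · obtain ⟨D, hD, hsep, hDC⟩ := hC.exists_finset_orthogonal_north hcard hφ hφθ hcap
    have hnorth : north (n + 1) ≠ 0 := norm_ne_zero_iff.1 (by simp [norm_north])
    have : Fact (finrank ℝ (EuclideanSpace ℝ (Fin (n + 1))) = n + 1) := ⟨finrank_euclideanSpace_fin⟩
    let L : (ℝ ∙ north (n + 1))ᗮ ≃ₗᵢ[ℝ] EuclideanSpace ℝ (Fin n) :=
      (OrthonormalBasis.fromOrthogonalSpanSingleton n hnorth).repr
    have hL : ∀ x ∈ D, ‖L x‖ = 1 := fun x hx ↦ (L.norm_map x).trans (hD x hx)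
    refine ⟨D.map L.toEquiv.toEmbedding, Finset.forall_mem_map.2 hL, ?_,
      (Finset.card_map _).trans hDC⟩
    refine Finset.forall_mem_map.2 fun x hx ↦ Finset.forall_mem_map.2 fun y hy hxy ↦ ?_
    have haDist : aDist (L x) (L y) = angle x y :=
      (aDist_eq_angle (hL x hx) (hL y hy)).trans (L.toLinearIsometry.angle_map x y)
    exact (hsep hx hy (ne_of_apply_ne L hxy)).trans_eq haDist.symm

end Codes

theorem stmt6_general (n : ℕ) (hn : 2 ≤ n) (θ φ : ℝ) (hφ : φ ≤ π / 2) (hφθ : φ < θ) :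
    capMax n θ φ ≤ sphereMax (n - 1) (π / 3) ∧
    ∀ K : ℕ,
      (∀ C : Finset (EuclideanSpace ℝ (Fin (n - 1))), (∀ x ∈ C, ‖x‖ = 1) → C.card = K →
        ∃ x ∈ C, ∃ y ∈ C, x ≠ y ∧ aDist x y ≤ π / 3) →
      capMax n θ φ < K := by
  obtain ⟨m, rfl⟩ : ∃ m, n = m + 1 := ⟨n - 1, by omega⟩
  have : NeZero m := ⟨by omega⟩
  refine ⟨capMax_le fun C hC hcap ↦ ?_, fun K hK ↦ capMax_lt fun C hC hcap ↦ ?_⟩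
  all_goals obtain ⟨D, hD, hsep, hDC⟩ := hC.exists_finset_pi_div_three_lt_aDist hφ hφθ hcap
  · have hcode : IsCode (π / 3) D := ⟨hD, fun x hx y hy hxy ↦ (hsep x hx y hy hxy).le⟩
    exact hDC ▸ hcode.card_le_sphereMax le_rfl
  · by_contra! hle
    obtain ⟨E, hED, hEK⟩ := Finset.exists_subset_card_eq (hle.trans_eq hDC.symm)
    obtain ⟨x, hx, y, hy, hxy, hnear⟩ := hK E (fun x hx ↦ hD x (hED hx)) hEK
    exact (hsep x (hED hx) y (hED hy) hxy).not_ge hnear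

theorem stmt6 (n : ℕ) (hn : 3 ≤ n) (θ φ : ℝ) (hφ : 0 < φ) (hφ2 : φ ≤ Real.pi / 2)
    (h1 : φ < θ) (h2 : θ ≤ 2 * φ) :
    capMax n θ φ ≤ sphereMax (n - 1) (Real.pi / 3) ∧
    ∀ K : ℕ, 2 ≤ K →
      (∀ C : Finset (EuclideanSpace ℝ (Fin (n - 1))), (∀ x ∈ C, ‖x‖ = 1) → C.card = K →
        ∃ x ∈ C, ∃ y ∈ C, x ≠ y ∧ aDist x y ≤ Real.pi / 3) →
      capMax n θ φ < K := by
  have h := stmt6_general n (by omega) θ φ hφ2 h1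
  exact ⟨h.1, fun K _ ↦ h.2 K⟩
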